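/- There exists a constant M > 0, depending only on A and C₀, such that for every t ≥ 0 one has β² ∫₀ᵗ ‖∂ₓ²u(s,·)‖²_{L²(ℝ)} ds ≤ M ε⁵. -/

import Mathlib

open MeasureTheory

/-!
Write `‖·‖` for the `L²` norm in `x`. For `B = 2A/3` and `C = -A/3` the energy
`S = ‖u‖² + β ‖∂ₓu‖²` satisfies `S' = -2ε (‖∂ₓu‖² + β ‖∂ₓ²u‖²)`. For the quartic functional
`E = A² ‖u‖⁴_{L⁴} + ε² ‖∂ₓu‖²`, completing squares gives
`ε E' + ε⁴ ‖∂ₓ²u‖² ≤ β² (9 A² m + (49/9) A⁴ m²) ‖∂ₓ²u‖²` whenever `u² ≤ m`.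
By Agmon's inequality one may take `m = ‖u‖ ‖∂ₓu‖`, and then `S ≤ C₀` and `β ≤ κ ε⁴` turn this into
`E' ≤ k (-S') (1 + E) - ε³ ‖∂ₓ²u‖²` with `k` depending only on `A`, `C₀` and `κ`.
The growth is driven by the dissipated energy, whose total is at most `C₀`, so the integrating
factor `exp (k S)` yields `ε³ ∫ ‖∂ₓ²u‖² ds ≤ (1 + E(0)) exp (k C₀)`; it remains to multiply by
`β² ≤ κ² ε⁸`.
-/

namespace KudryashovSinelshchikov

open Function Set

/-! ### Agmon and Grönwall inequalities -/

theorem integral_abs_mul_le_sqrt_integral_sq_mul {α : Type*} [MeasurableSpace α] {μ : Measure α}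
    {f g : α → ℝ} (hf : MemLp f 2 μ) (hg : MemLp g 2 μ) :
    ∫ x, |f x * g x| ∂μ ≤ √((∫ x, f x ^ 2 ∂μ) * ∫ x, g x ^ 2 ∂μ) := by
  have holder := integral_mul_norm_le_Lp_mul_Lq Real.HolderConjugate.two_two
    (by simpa using hf) (by simpa using hg)
  rw [Real.sqrt_mul (integral_nonneg fun x => sq_nonneg (f x))]
  simpa only [Real.norm_eq_abs, ← abs_mul, Real.rpow_ofNat, sq_abs, ← Real.sqrt_eq_rpow]
    using holder

theorem sq_le_integral_abs_mul_deriv {f f' : ℝ → ℝ} (hf : ∀ x, HasDerivAt f (f' x) x)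
    (hf_sq : Integrable fun x => f x ^ 2) (hff' : Integrable fun x => f x * f' x) (x : ℝ) :
    f x ^ 2 ≤ ∫ y, |f y * f' y| := by
  have hderiv (y : ℝ) : HasDerivAt (fun y => f y ^ 2) (2 * (f y * f' y)) y := by
    simpa [mul_assoc] using (hf y).fun_pow 2
  have hint : Integrable fun y => 2 * (f y * f' y) := hff'.const_mul 2
  have left : ∫ y in Iic x, 2 * (f y * f' y) = f x ^ 2 - 0 :=
    integral_Iic_of_hasDerivAt_of_tendsto' (fun y _ => hderiv y) hint.integrableOn
      (tendsto_zero_of_hasDerivAt_of_integrableOn_Iic (a := x) (fun y _ => hderiv y)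
        hint.integrableOn hf_sq.integrableOn)
  have right : ∫ y in Ioi x, 2 * (f y * f' y) = 0 - f x ^ 2 :=
    integral_Ioi_of_hasDerivAt_of_tendsto' (fun y _ => hderiv y) hint.integrableOn
      (tendsto_zero_of_hasDerivAt_of_integrableOn_Ioi (a := x) (fun y _ => hderiv y)
        hint.integrableOn hf_sq.integrableOn)
  have left_le := (le_abs_self _).trans
    (abs_integral_le_integral_abs (μ := volume.restrict (Iic x)) (f := fun y => f y * f' y))
  have right_le := (neg_le_abs _).trans
    (abs_integral_le_integral_abs (μ := volume.restrict (Ioi x)) (f := fun y => f y * f' y))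
  have split := integral_add_compl (measurableSet_Iic (a := x)) hff'.abs
  rw [compl_Iic] at split
  rw [integral_const_mul] at left right
  linarith

theorem sq_le_sqrt_integral_sq_mul_integral_deriv_sq {f f' : ℝ → ℝ}
    (hderiv : ∀ x, HasDerivAt f (f' x) x) (hf : MemLp f 2) (hf_deriv : MemLp f' 2) (x : ℝ) :
    f x ^ 2 ≤ √((∫ y, f y ^ 2) * ∫ y, f' y ^ 2) :=
  (sq_le_integral_abs_mul_deriv hderiv hf.integrable_sq (hf.integrable_mul hf_deriv) x).trans
    (integral_abs_mul_le_sqrt_integral_sq_mul hf hf_deriv)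

/-- The integrating factor `exp (K * S)` absorbs the growth term. -/
theorem integral_le_mul_exp_of_deriv_le {Y S Y' S' Q : ℝ → ℝ} {K a b : ℝ} (hab : a ≤ b)
    (hY : ∀ s ∈ Icc a b, HasDerivAt Y (Y' s) s) (hS : ∀ s ∈ Icc a b, HasDerivAt S (S' s) s)
    (hQ : IntegrableOn Q (Icc a b)) (hK : 0 ≤ K) (hYb : 0 ≤ Y b)
    (hS_nonneg : ∀ s ∈ Icc a b, 0 ≤ S s) (hQ_nonneg : ∀ s ∈ Icc a b, 0 ≤ Q s)
    (hY' : ∀ s ∈ Icc a b, Y' s ≤ K * -S' s * Y s - Q s) :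
    ∫ s in a..b, Q s ≤ Y a * Real.exp (K * S a) := by
  have hderiv (s : ℝ) (hs : s ∈ Icc a b) := (hY s hs).fun_mul ((hS s hs).const_mul K).exp
  have deriv_le (s : ℝ) (hs : s ∈ Icc a b) :
      Y' s * Real.exp (K * S s) + Y s * (Real.exp (K * S s) * (K * S' s)) ≤ -Q s := by
    have one_le : 1 ≤ Real.exp (K * S s) := Real.one_le_exp (mul_nonneg hK (hS_nonneg s hs))
    calc Y' s * Real.exp (K * S s) + Y s * (Real.exp (K * S s) * (K * S' s))
        = (Y' s - K * -S' s * Y s) * Real.exp (K * S s) := by ring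
      _ ≤ -Q s * Real.exp (K * S s) := by gcongr; linarith [hY' s hs]
      _ ≤ -Q s := by nlinarith [hQ_nonneg s hs]
  have decay := intervalIntegral.sub_le_integral_of_hasDeriv_right_of_le hab
    (fun s hs => (hderiv s hs).continuousAt.continuousWithinAt)
    (fun s hs => (hderiv s (Ioo_subset_Icc_self hs)).hasDerivWithinAt) hQ.fun_neg
    (fun s hs => deriv_le s (Ioo_subset_Icc_self hs))
  have : 0 ≤ Y b * Real.exp (K * S b) := by positivity
  rw [intervalIntegral.integral_neg] at decay
  linarith

/-! ### Differentiation under the integral and mixed partial derivatives -/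

section Parametric

variable {X E : Type*} [TopologicalSpace X] [T2Space X] [MeasurableSpace X] [OpensMeasurableSpace X]
  [NormedAddCommGroup E] [NormedSpace ℝ E] [SecondCountableTopologyEither X E] {μ : Measure X}
  [IsLocallyFiniteMeasure μ] {K : Set X}

theorem hasDerivAt_setIntegral_of_isCompact {g g' : ℝ → X → E} (hK : IsCompact K)
    (hg : Continuous (uncurry g)) (hg' : Continuous (uncurry g'))
    (hderiv : ∀ t x, HasDerivAt (fun τ => g τ x) (g' t x) t) (t : ℝ) :
    HasDerivAt (fun τ => ∫ x in K, g τ x ∂μ) (∫ x in K, g' t x ∂μ) t := by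
  obtain ⟨C, hC⟩ := ((isCompact_closedBall t 1).prod hK).exists_bound_of_continuousOn
    hg'.continuousOn
  have slice (h : ℝ → X → E) (hh : Continuous (uncurry h)) (τ : ℝ) :
      AEStronglyMeasurable (h τ) (μ.restrict K) :=
    (hh.comp (Continuous.prodMk_right τ)).aestronglyMeasurable
  exact (hasDerivAt_integral_of_dominated_loc_of_deriv_le (bound := fun _ => C)
    (Metric.closedBall_mem_nhds t one_pos) (.of_forall fun τ => slice g hg τ)
    ((hg.comp (Continuous.prodMk_right t)).continuousOn.integrableOn_compact hK)
    (slice g' hg' t)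
    (ae_restrict_of_forall_mem hK.measurableSet fun x hx τ hτ => hC (τ, x) ⟨hτ, hx⟩)
    (integrableOn_const hK.measure_ne_top)
    (.of_forall fun x τ _ => hderiv τ x)).2

theorem hasDerivAt_integral_of_isCompact {g g' : ℝ → X → E} (hK : IsCompact K)
    (hg : Continuous (uncurry g)) (hg' : Continuous (uncurry g'))
    (hderiv : ∀ t x, HasDerivAt (fun τ => g τ x) (g' t x) t)
    (hgK : ∀ t, ∀ x ∉ K, g t x = 0) (t : ℝ) :
    HasDerivAt (fun τ => ∫ x, g τ x ∂μ) (∫ x, g' t x ∂μ) t := by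
  have hg'K (x : X) (hx : x ∉ K) : g' t x = 0 :=
    (hderiv t x).unique (by simpa only [hgK _ x hx] using hasDerivAt_const t 0)
  simpa only [setIntegral_eq_integral_of_forall_compl_eq_zero (hgK _),
    setIntegral_eq_integral_of_forall_compl_eq_zero hg'K]
    using hasDerivAt_setIntegral_of_isCompact (μ := μ) hK hg hg' hderiv t

end Parametric

section Clairaut

/-- The partial derivative `∂ₜu` as a function of time and space. -/
noncomputable def timeDeriv (u : ℝ → ℝ → ℝ) (t x : ℝ) : ℝ := deriv (fun τ => u τ x) t

variable {u : ℝ → ℝ → ℝ} {m n : WithTop ℕ∞}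

theorem contDiff_uncurry_deriv (hu : ContDiff ℝ n (uncurry u)) (hmn : m + 1 ≤ n) :
    ContDiff ℝ m (uncurry fun t => deriv (u t)) :=
  ContDiff.fderiv_apply (f := fun p : ℝ × ℝ => u p.1) (g := Prod.snd) (k := fun _ => 1)
    (hu.comp (by fun_prop : ContDiff ℝ n fun q : (ℝ × ℝ) × ℝ => (q.1.1, q.2)))
    contDiff_snd contDiff_const hmn

theorem contDiff_uncurry_timeDeriv (hu : ContDiff ℝ n (uncurry u)) (hmn : m + 1 ≤ n) :
    ContDiff ℝ m (uncurry (timeDeriv u)) :=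
  ContDiff.fderiv_apply (f := fun (p : ℝ × ℝ) τ => u τ p.2) (g := Prod.fst) (k := fun _ => 1)
    (hu.comp (by fun_prop : ContDiff ℝ n fun q : (ℝ × ℝ) × ℝ => (q.2, q.1.2)))
    contDiff_fst contDiff_const hmn

theorem hasDerivAt_timeDeriv (hu : Differentiable ℝ (uncurry u)) (t x : ℝ) :
    HasDerivAt (fun τ => u τ x) (timeDeriv u t x) t :=
  (hu.comp (by fun_prop : Differentiable ℝ fun τ : ℝ => (τ, x)) t).hasDerivAt

theorem deriv_eq_fderiv_uncurry (hu : Differentiable ℝ (uncurry u)) (t x : ℝ) :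
    deriv (u t) x = fderiv ℝ (uncurry u) (t, x) (0, 1) :=
  ((hu (t, x)).hasFDerivAt.comp_hasDerivAt x
    ((hasDerivAt_const x t).prodMk (hasDerivAt_id x))).deriv

theorem timeDeriv_eq_fderiv_uncurry (hu : Differentiable ℝ (uncurry u)) (t x : ℝ) :
    timeDeriv u t x = fderiv ℝ (uncurry u) (t, x) (1, 0) :=
  HasDerivAt.deriv <| (hu (t, x)).hasFDerivAt.comp_hasDerivAt (f := fun τ => (τ, x)) t
    ((hasDerivAt_id t).prodMk (hasDerivAt_const t x))

theorem timeDeriv_deriv_comm (hu : ContDiff ℝ 2 (uncurry u)) (t x : ℝ) :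
    timeDeriv (fun τ => deriv (u τ)) t x = deriv (timeDeriv u t) x := by
  have hu_diff : Differentiable ℝ (uncurry u) := hu.differentiable two_ne_zero
  have hfderiv_diff : Differentiable ℝ (fderiv ℝ (uncurry u)) :=
    (hu.fderiv_right (m := 1) (by norm_num)).differentiable one_ne_zero
  have hsymm : IsSymmSndFDerivAt ℝ (uncurry u) (t, x) := hu.contDiffAt.isSymmSndFDerivAt (by simp)
  have deriv_eq : uncurry (fun τ => deriv (u τ)) = fun p => fderiv ℝ (uncurry u) p (0, 1) :=
    funext fun p => deriv_eq_fderiv_uncurry hu_diff p.1 p.2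
  have timeDeriv_eq : uncurry (timeDeriv u) = fun p => fderiv ℝ (uncurry u) p (1, 0) :=
    funext fun p => timeDeriv_eq_fderiv_uncurry hu_diff p.1 p.2
  rw [timeDeriv_eq_fderiv_uncurry
      ((contDiff_uncurry_deriv hu one_add_one_eq_two.le).differentiable one_ne_zero),
    deriv_eq_fderiv_uncurry
      ((contDiff_uncurry_timeDeriv hu one_add_one_eq_two.le).differentiable one_ne_zero),
    deriv_eq, timeDeriv_eq,
    fderiv_clm_apply (hfderiv_diff _) (differentiableAt_const _),
    fderiv_clm_apply (hfderiv_diff _) (differentiableAt_const _)]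
  simpa using hsymm (1, 0) (0, 1)

end Clairaut

/-! ### The spatial operator and its moments -/

section Slice

theorem deriv_eq_zero_of_forall_notMem {𝕜 F : Type*} [NontriviallyNormedField 𝕜]
    [NormedAddCommGroup F] [NormedSpace 𝕜 F] {f : 𝕜 → F} {K : Set 𝕜} (hK : IsClosed K)
    (hf : ∀ x ∉ K, f x = 0) : ∀ x ∉ K, deriv f x = 0 :=
  support_subset_iff'.1 <| support_deriv_subset.trans <|
    closure_minimal (support_subset_iff'.2 hf) hK

theorem integral_eq_integral_of_hasDerivAt_sub {f g Q : ℝ → ℝ} (hf : Integrable f)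
    (hg : Integrable g) (hQ : Integrable Q) (hderiv : ∀ x, HasDerivAt Q (f x - g x) x) :
    ∫ x, f x = ∫ x, g x := by
  rw [← sub_eq_zero, ← integral_sub hf hg]
  exact integral_eq_zero_of_hasDerivAt_of_integrable hderiv (hf.sub hg) hQ

variable {v : ℝ → ℝ}

theorem continuous_jet (hv : ContDiff ℝ 2 v) :
    Continuous v ∧ Continuous (deriv v) ∧ Continuous (deriv (deriv v)) :=
  have hv' : ContDiff ℝ 1 (deriv v) := ContDiff.deriv' hv
  ⟨hv.continuous, hv'.continuous, hv'.continuous_deriv le_rfl⟩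

theorem hasDerivAt_jet (hv : ContDiff ℝ 3 v) (x : ℝ) :
    HasDerivAt v (deriv v x) x ∧ HasDerivAt (deriv v) (deriv (deriv v) x) x ∧
      HasDerivAt (deriv (deriv v)) (deriv (deriv (deriv v)) x) x :=
  have hv' : ContDiff ℝ 2 (deriv v) := ContDiff.deriv' hv
  have hv'' : ContDiff ℝ 1 (deriv (deriv v)) := ContDiff.deriv' hv'
  ⟨(hv.differentiable three_ne_zero x).hasDerivAt, (hv'.differentiable two_ne_zero x).hasDerivAt,
    (hv''.differentiable one_ne_zero x).hasDerivAt⟩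

theorem integrable_of_jet_eq_zero {f : ℝ → ℝ} (hv : HasCompactSupport v) (hf : Continuous f)
    (hfv : ∀ x, v x = 0 → deriv v x = 0 → deriv (deriv v) x = 0 → f x = 0) : Integrable f :=
  have hv₀ (x : ℝ) : x ∉ tsupport v → v x = 0 := image_eq_zero_of_notMem_tsupport
  have hv₁ := deriv_eq_zero_of_forall_notMem (isClosed_tsupport v) hv₀
  have hv₂ := deriv_eq_zero_of_forall_notMem (isClosed_tsupport v) hv₁
  hf.integrable_of_hasCompactSupport <| .intro hv.isCompact fun x hx =>
    hfv x (hv₀ x hx) (hv₁ x hx) (hv₂ x hx)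

/-- The Kudryashov–Sinelshchikov equation (with `D = 0`) solved for `∂ₜu`, as a differential
operator acting on a spatial profile `v`. -/
noncomputable def ksRhs (A B C ε β : ℝ) (v : ℝ → ℝ) (x : ℝ) : ℝ :=
  -(A * v x * deriv v x) - β * deriv (deriv (deriv v)) x
    + B * β * deriv (fun y => v y * deriv (deriv v) y) x
    + C * β * deriv v x * deriv (deriv v) x + ε * deriv (deriv v) x

variable {A B C ε β m : ℝ}

theorem ksRhs_eq (hv : ContDiff ℝ 3 v) (x : ℝ) :
    ksRhs A B C ε β v x = -(A * v x * deriv v x) - β * deriv (deriv (deriv v)) x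
      + B * β * (deriv v x * deriv (deriv v) x + v x * deriv (deriv (deriv v)) x)
      + C * β * deriv v x * deriv (deriv v) x + ε * deriv (deriv v) x := by
  obtain ⟨d₀, -, d₂⟩ := hasDerivAt_jet hv x
  rw [ksRhs, (d₀.fun_mul d₂).deriv]

theorem continuous_ksRhs (hv : ContDiff ℝ 3 v) : Continuous (ksRhs A B C ε β v) := by
  have hv₀ := hv.continuous
  obtain ⟨hv₁, hv₂, _⟩ := continuous_jet (v := deriv v) (ContDiff.deriv' hv)
  rw [funext (ksRhs_eq hv)]
  fun_prop

theorem integral_two_mul_mul_ksRhs (hv : ContDiff ℝ 3 v) (hvc : HasCompactSupport v) :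
    ∫ x, 2 * v x * ksRhs A B C ε β v x =
      ∫ x, (2 * (C - B) * β * (v x * deriv v x * deriv (deriv v) x) - 2 * ε * deriv v x ^ 2) := by
  obtain ⟨c₀, c₁, c₂⟩ := continuous_jet (hv.of_le (by norm_num))
  have hrhs := continuous_ksRhs (A := A) (B := B) (C := C) (ε := ε) (β := β) hv
  refine integral_eq_integral_of_hasDerivAt_sub
    (Q := fun x => -(2 * A / 3) * v x ^ 3 - 2 * β * (v x * deriv (deriv v) x) + β * deriv v x ^ 2
      + 2 * B * β * (v x ^ 2 * deriv (deriv v) x) + 2 * ε * (v x * deriv v x))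
    (integrable_of_jet_eq_zero hvc (by fun_prop) fun x h₀ _ _ => by simp [h₀])
    (integrable_of_jet_eq_zero hvc (by fun_prop) fun x h₀ h₁ _ => by simp [h₀, h₁])
    (integrable_of_jet_eq_zero hvc (by fun_prop) fun x h₀ h₁ _ => by simp [h₀, h₁]) fun x => ?_
  obtain ⟨d₀, d₁, d₂⟩ := hasDerivAt_jet hv x
  refine (((((d₀.fun_pow 3).const_mul _).fun_sub ((d₀.fun_mul d₂).const_mul _)).fun_add
    ((d₁.fun_pow 2).const_mul _)).fun_add (((d₀.fun_pow 2).fun_mul d₂).const_mul _)).fun_add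
    ((d₀.fun_mul d₁).const_mul _) |>.congr_deriv ?_
  rw [ksRhs_eq hv]
  push_cast
  ring

theorem integral_neg_two_mul_deriv_deriv_mul_ksRhs (hv : ContDiff ℝ 3 v)
    (hvc : HasCompactSupport v) :
    ∫ x, -2 * deriv (deriv v) x * ksRhs A B C ε β v x =
      ∫ x, (2 * A * (v x * deriv v x * deriv (deriv v) x)
        - (B + 2 * C) * β * (deriv v x * deriv (deriv v) x ^ 2)
        - 2 * ε * deriv (deriv v) x ^ 2) := by
  obtain ⟨c₀, c₁, c₂⟩ := continuous_jet (hv.of_le (by norm_num))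
  have hrhs := continuous_ksRhs (A := A) (B := B) (C := C) (ε := ε) (β := β) hv
  refine integral_eq_integral_of_hasDerivAt_sub
    (Q := fun x => β * deriv (deriv v) x ^ 2 - B * β * (v x * deriv (deriv v) x ^ 2))
    (integrable_of_jet_eq_zero hvc (by fun_prop) fun x _ _ h₂ => by simp [h₂])
    (integrable_of_jet_eq_zero hvc (by fun_prop) fun x _ _ h₂ => by simp [h₂])
    (integrable_of_jet_eq_zero hvc (by fun_prop) fun x _ _ h₂ => by simp [h₂]) fun x => ?_
  obtain ⟨d₀, -, d₂⟩ := hasDerivAt_jet hv x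
  refine ((d₂.fun_pow 2).const_mul _).fun_sub
    ((d₀.fun_mul (d₂.fun_pow 2)).const_mul _) |>.congr_deriv ?_
  rw [ksRhs_eq hv]
  push_cast
  ring

theorem integral_four_mul_cube_mul_ksRhs (hv : ContDiff ℝ 3 v) (hvc : HasCompactSupport v) :
    ∫ x, 4 * v x ^ 3 * ksRhs A B C ε β v x =
      ∫ x, (12 * β * (v x ^ 2 * deriv v x * deriv (deriv v) x)
        + 4 * (C - 3 * B) * β * (v x ^ 3 * deriv v x * deriv (deriv v) x)
        - 12 * ε * (v x ^ 2 * deriv v x ^ 2)) := by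
  obtain ⟨c₀, c₁, c₂⟩ := continuous_jet (hv.of_le (by norm_num))
  have hrhs := continuous_ksRhs (A := A) (B := B) (C := C) (ε := ε) (β := β) hv
  refine integral_eq_integral_of_hasDerivAt_sub
    (Q := fun x => -(4 * A / 5) * v x ^ 5 - 4 * β * (v x ^ 3 * deriv (deriv v) x)
      + 4 * B * β * (v x ^ 4 * deriv (deriv v) x) + 4 * ε * (v x ^ 3 * deriv v x))
    (integrable_of_jet_eq_zero hvc (by fun_prop) fun x h₀ _ _ => by simp [h₀])
    (integrable_of_jet_eq_zero hvc (by fun_prop) fun x h₀ _ _ => by simp [h₀])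
    (integrable_of_jet_eq_zero hvc (by fun_prop) fun x h₀ _ _ => by simp [h₀]) fun x => ?_
  obtain ⟨d₀, d₁, d₂⟩ := hasDerivAt_jet hv x
  refine ((((d₀.fun_pow 5).const_mul _).fun_sub (((d₀.fun_pow 3).fun_mul d₂).const_mul _)).fun_add
    (((d₀.fun_pow 4).fun_mul d₂).const_mul _)).fun_add
    (((d₀.fun_pow 3).fun_mul d₁).const_mul _) |>.congr_deriv ?_
  rw [ksRhs_eq hv]
  push_cast
  ring

theorem integral_two_mul_mul_ksRhs_add (hv : ContDiff ℝ 3 v) (hvc : HasCompactSupport v) :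
    (∫ x, 2 * v x * ksRhs A (2 * A / 3) (-(A / 3)) ε β v x)
      + β * ∫ x, -2 * deriv (deriv v) x * ksRhs A (2 * A / 3) (-(A / 3)) ε β v x =
    -(2 * ε) * ((∫ x, deriv v x ^ 2) + β * ∫ x, deriv (deriv v) x ^ 2) := by
  obtain ⟨c₀, c₁, c₂⟩ := continuous_jet (hv.of_le (by norm_num))
  rw [integral_two_mul_mul_ksRhs hv hvc, integral_neg_two_mul_deriv_deriv_mul_ksRhs hv hvc,
    ← integral_const_mul, ← integral_const_mul, ← integral_add, ← integral_add,
    ← integral_const_mul]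
  · congr with x
    ring
  all_goals exact integrable_of_jet_eq_zero hvc (by fun_prop) fun x _ h₁ h₂ => by simp [h₁, h₂]

/-- The difference of the two sides is
`A² (2εpq - 3βpr)² + A² (2εpq + (7/3)Aβp²r)² + ε² (εr - Apq)² + 3 (Aεpq)²`. -/
theorem quartic_flux_density_le (A ε β p q r : ℝ) :
    ε * (A ^ 2 * (12 * β * (p ^ 2 * q * r) - 28 * A / 3 * β * (p ^ 3 * q * r)
        - 12 * ε * (p ^ 2 * q ^ 2)) + ε ^ 2 * (2 * A * (p * q * r) - 2 * ε * r ^ 2))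
      + ε ^ 4 * r ^ 2 ≤ β ^ 2 * (9 * A ^ 2 * p ^ 2 + 49 / 9 * A ^ 4 * (p ^ 2) ^ 2) * r ^ 2 := by
  linarith [sq_nonneg (A * (2 * ε * p * q - 3 * β * p * r)),
    sq_nonneg (A * (2 * ε * p * q + 7 / 3 * A * β * p ^ 2 * r)),
    sq_nonneg (ε * (ε * r - A * p * q)), sq_nonneg (A * ε * p * q)]

theorem quartic_flux_le (hv : ContDiff ℝ 3 v) (hvc : HasCompactSupport v)
    (hm : ∀ x, v x ^ 2 ≤ m) :
    ε * (A ^ 2 * (∫ x, 4 * v x ^ 3 * ksRhs A (2 * A / 3) (-(A / 3)) ε β v x)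
        + ε ^ 2 * ∫ x, -2 * deriv (deriv v) x * ksRhs A (2 * A / 3) (-(A / 3)) ε β v x)
      + ε ^ 4 * ∫ x, deriv (deriv v) x ^ 2 ≤
    β ^ 2 * (9 * A ^ 2 * m + 49 / 9 * A ^ 4 * m ^ 2) * ∫ x, deriv (deriv v) x ^ 2 := by
  obtain ⟨c₀, c₁, c₂⟩ := continuous_jet (hv.of_le (by norm_num))
  rw [integral_four_mul_cube_mul_ksRhs hv hvc, integral_neg_two_mul_deriv_deriv_mul_ksRhs hv hvc,
    ← integral_const_mul, ← integral_const_mul, ← integral_add, ← integral_const_mul,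
    ← integral_const_mul, ← integral_add, ← integral_const_mul]
  · refine integral_mono
      (integrable_of_jet_eq_zero hvc (by fun_prop) fun x _ h₁ h₂ => by simp [h₁, h₂])
      (integrable_of_jet_eq_zero hvc (by fun_prop) fun x _ _ h₂ => by simp [h₂]) fun x => ?_
    have density_le := quartic_flux_density_le A ε β (v x) (deriv v x) (deriv (deriv v) x)
    have weight_le : 9 * A ^ 2 * v x ^ 2 + 49 / 9 * A ^ 4 * (v x ^ 2) ^ 2 ≤
        9 * A ^ 2 * m + 49 / 9 * A ^ 4 * m ^ 2 := by gcongr <;> exact hm x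
    have := mul_le_mul_of_nonneg_left weight_le
      (mul_nonneg (sq_nonneg β) (sq_nonneg (deriv (deriv v) x)))
    linarith
  all_goals exact integrable_of_jet_eq_zero hvc (by fun_prop) fun x _ h₁ h₂ => by simp [h₁, h₂]

end Slice

/-! ### Time derivatives of spatial integrals -/

section Evolution

variable {u : ℝ → ℝ → ℝ} {K : Set ℝ}

theorem hasDerivAt_integral_pow {n : ℕ} (hn : n ≠ 0) (hu : ContDiff ℝ 1 (uncurry u))
    (hK : IsCompact K) (huK : ∀ t, ∀ x ∉ K, u t x = 0) (t : ℝ) :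
    HasDerivAt (fun τ => ∫ x, u τ x ^ n) (∫ x, n * u t x ^ (n - 1) * timeDeriv u t x) t := by
  have hu₀ : Continuous (uncurry u) := hu.continuous
  have hut : Continuous (uncurry (timeDeriv u)) :=
    (contDiff_uncurry_timeDeriv hu (zero_add 1).le).continuous
  exact hasDerivAt_integral_of_isCompact hK (g := fun t x => u t x ^ n)
    (g' := fun t x => n * u t x ^ (n - 1) * timeDeriv u t x) (hu₀.pow n)
    ((continuous_const.mul (hu₀.pow (n - 1))).mul hut)
    (fun t x => (hasDerivAt_timeDeriv (hu.differentiable one_ne_zero) t x).fun_pow n)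
    (fun t x hx => by simp [huK t x hx, hn]) t

theorem hasDerivAt_integral_deriv_sq (hu : ContDiff ℝ 2 (uncurry u)) (hK : IsCompact K)
    (huK : ∀ t, ∀ x ∉ K, u t x = 0) (t : ℝ) :
    HasDerivAt (fun τ => ∫ x, deriv (u τ) x ^ 2)
      (∫ x, -2 * deriv (deriv (u t)) x * timeDeriv u t x) t := by
  have hslice : ContDiff ℝ 2 (u t) := hu.comp (contDiff_prodMk_right t)
  have hslice_deriv : ContDiff ℝ 1 (deriv (u t)) := ContDiff.deriv' hslice
  have hslice_timeDeriv : ContDiff ℝ 1 (timeDeriv u t) :=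
    (contDiff_uncurry_timeDeriv hu one_add_one_eq_two.le).comp (contDiff_prodMk_right t)
  obtain ⟨-, c₁, _⟩ := continuous_jet hslice
  have : Continuous (timeDeriv u t) := hslice_timeDeriv.continuous
  have : Continuous (deriv (timeDeriv u t)) := hslice_timeDeriv.continuous_deriv le_rfl
  have hsupp : HasCompactSupport (u t) := .intro hK (huK t)
  refine (hasDerivAt_integral_pow two_ne_zero (contDiff_uncurry_deriv hu one_add_one_eq_two.le) hK
    (fun t => deriv_eq_zero_of_forall_notMem hK.isClosed (huK t)) t).congr_deriv ?_
  simp only [timeDeriv_deriv_comm hu]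
  refine integral_eq_integral_of_hasDerivAt_sub (Q := fun x => 2 * deriv (u t) x * timeDeriv u t x)
    (integrable_of_jet_eq_zero hsupp (by fun_prop) fun x _ h₁ _ => by simp [h₁])
    (integrable_of_jet_eq_zero hsupp (by fun_prop) fun x _ _ h₂ => by simp [h₂])
    (integrable_of_jet_eq_zero hsupp (by fun_prop) fun x _ h₁ _ => by simp [h₁]) fun x => ?_
  refine ((hslice_deriv.differentiable one_ne_zero x).hasDerivAt.const_mul 2).fun_mul
    (hslice_timeDeriv.differentiable one_ne_zero x).hasDerivAt |>.congr_deriv ?_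
  push_cast
  ring

theorem continuous_integral_deriv_deriv_sq (hu : ContDiff ℝ 2 (uncurry u)) (hK : IsCompact K)
    (huK : ∀ t, ∀ x ∉ K, u t x = 0) : Continuous fun t => ∫ x, deriv (deriv (u t)) x ^ 2 := by
  have hu'' : Continuous (uncurry fun t => deriv (deriv (u t))) :=
    (contDiff_uncurry_deriv (contDiff_uncurry_deriv hu one_add_one_eq_two.le)
      (zero_add 1).le).continuous
  have hu''K (t : ℝ) : ∀ x ∉ K, deriv (deriv (u t)) x = 0 :=
    deriv_eq_zero_of_forall_notMem hK.isClosed (deriv_eq_zero_of_forall_notMem hK.isClosed (huK t))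
  rw [← continuousOn_univ]
  exact continuousOn_integral_of_compact_support hK (hu''.pow 2).continuousOn
    fun t x _ hx => by simp [hu''K t x hx]

end Evolution

/-! ### The differential inequality for a profile -/

section Interpolation

variable {F G C₀ ε β κ : ℝ}

theorem mul_sqrt_mul_le (hF : 0 ≤ F) (hG : 0 ≤ G) (hβ : 0 ≤ β) (hFG : F + β * G ≤ C₀)
    (hβκ : β ≤ κ * ε ^ 4) : β * √(F * G) ≤ √κ * C₀ * ε ^ 2 := by
  have hβG : 0 ≤ β * G := by positivity
  have hC₀ : 0 ≤ C₀ := by linarith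
  calc β * √(F * G) = √(β * (F * (β * G))) := by
        rw [show β * (F * (β * G)) = β ^ 2 * (F * G) by ring, Real.sqrt_mul (sq_nonneg β),
          Real.sqrt_sq hβ]
    _ ≤ √(κ * ε ^ 4 * (C₀ * C₀)) := by gcongr <;> linarith
    _ = √κ * C₀ * ε ^ 2 := by
        rw [show κ * ε ^ 4 * (C₀ * C₀) = κ * (C₀ * ε ^ 2) ^ 2 by ring,
          Real.sqrt_mul' _ (sq_nonneg _), Real.sqrt_sq (by positivity), mul_assoc]

theorem mul_sq_sqrt_mul_le (hF : 0 ≤ F) (hG : 0 ≤ G) (hβ : 0 ≤ β) (hFG : F + β * G ≤ C₀)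
    (hβκ : β ≤ κ * ε ^ 4) : β * √(F * G) ^ 2 ≤ κ * C₀ * ε ^ 2 * (ε ^ 2 * G) := by
  have hβG : 0 ≤ β * G := by positivity
  calc β * √(F * G) ^ 2 = β * F * G := by rw [Real.sq_sqrt (by positivity), mul_assoc]
    _ ≤ κ * ε ^ 4 * C₀ * G := by gcongr <;> linarith
    _ = κ * C₀ * ε ^ 2 * (ε ^ 2 * G) := by ring

end Interpolation

section Energies

variable {A C₀ ε β κ : ℝ} {v : ℝ → ℝ}

/-- The `H¹`-type energy `‖v‖²_{L²} + β ‖v'‖²_{L²}`. -/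
noncomputable def energy (β : ℝ) (v : ℝ → ℝ) : ℝ := (∫ x, v x ^ 2) + β * ∫ x, deriv v x ^ 2

/-- The higher-order functional `A² ‖v‖⁴_{L⁴} + ε² ‖v'‖²_{L²}`. -/
noncomputable def quarticEnergy (A ε : ℝ) (v : ℝ → ℝ) : ℝ :=
  A ^ 2 * (∫ x, v x ^ 4) + ε ^ 2 * ∫ x, deriv v x ^ 2

theorem energy_nonneg (hβ : 0 ≤ β) : 0 ≤ energy β v := by
  unfold energy
  positivity

theorem quarticEnergy_nonneg : 0 ≤ quarticEnergy A ε v := by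
  unfold quarticEnergy
  positivity

theorem energy_le_of_le
    (hv : (∫ x, v x ^ 2) + (∫ x, v x ^ 4) + (β + ε ^ 2) * (∫ x, deriv v x ^ 2) ≤ C₀) :
    energy β v ≤ C₀ := by
  have : 0 ≤ ∫ x, v x ^ 4 := by positivity
  have : 0 ≤ ε ^ 2 * ∫ x, deriv v x ^ 2 := by positivity
  unfold energy
  linarith

theorem quarticEnergy_le_of_le (hβ : 0 ≤ β)
    (hv : (∫ x, v x ^ 2) + (∫ x, v x ^ 4) + (β + ε ^ 2) * (∫ x, deriv v x ^ 2) ≤ C₀) :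
    quarticEnergy A ε v ≤ (A ^ 2 + 1) * C₀ := by
  have hL2 : 0 ≤ ∫ x, v x ^ 2 := by positivity
  have hL4 : 0 ≤ ∫ x, v x ^ 4 := by positivity
  have hβG : 0 ≤ β * ∫ x, deriv v x ^ 2 := by positivity
  have hεG : 0 ≤ ε ^ 2 * ∫ x, deriv v x ^ 2 := by positivity
  calc quarticEnergy A ε v ≤ A ^ 2 * C₀ + C₀ := by unfold quarticEnergy; gcongr <;> linarith
    _ = (A ^ 2 + 1) * C₀ := by ring

/-- The constant `k` in the differential inequality `E' ≤ k (-S') (1 + E) - ε³ ‖v''‖²_{L²}`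
relating `E = quarticEnergy A ε v` and `S = energy β v`. -/
noncomputable def growthRate (A C₀ κ : ℝ) : ℝ :=
  (9 * A ^ 2 * (√κ * C₀) + 49 / 9 * A ^ 4 * (κ * C₀)) / 2

theorem growthRate_nonneg (hC₀ : 0 ≤ C₀) (hκ : 0 ≤ κ) : 0 ≤ growthRate A C₀ κ := by
  unfold growthRate
  positivity

theorem mul_sqrt_add_sq_sqrt_le_growthRate (hβ : 0 ≤ β) (hκ : 0 ≤ κ) (hv : energy β v ≤ C₀)
    (hβκ : β ≤ κ * ε ^ 4) :
    β * (9 * A ^ 2 * √((∫ x, v x ^ 2) * ∫ x, deriv v x ^ 2)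
        + 49 / 9 * A ^ 4 * √((∫ x, v x ^ 2) * ∫ x, deriv v x ^ 2) ^ 2) ≤
      2 * growthRate A C₀ κ * ε ^ 2 * (1 + quarticEnergy A ε v) := by
  have hF : 0 ≤ ∫ x, v x ^ 2 := by positivity
  have hG : 0 ≤ ∫ x, deriv v x ^ 2 := by positivity
  have hC₀ : 0 ≤ C₀ := (energy_nonneg hβ).trans hv
  have hE : 0 ≤ quarticEnergy A ε v := quarticEnergy_nonneg
  have gradient_le : ε ^ 2 * (∫ x, deriv v x ^ 2) ≤ quarticEnergy A ε v :=
    le_add_of_nonneg_left (by positivity)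
  have linear_le : β * √((∫ x, v x ^ 2) * ∫ x, deriv v x ^ 2) ≤
      √κ * C₀ * ε ^ 2 * (1 + quarticEnergy A ε v) :=
    (mul_sqrt_mul_le hF hG hβ hv hβκ).trans
      (le_mul_of_one_le_right (by positivity) (le_add_of_nonneg_right hE))
  have quadratic_le : β * √((∫ x, v x ^ 2) * ∫ x, deriv v x ^ 2) ^ 2 ≤
      κ * C₀ * ε ^ 2 * (1 + quarticEnergy A ε v) :=
    (mul_sq_sqrt_mul_le hF hG hβ hv hβκ).trans
      (mul_le_mul_of_nonneg_left (by linarith) (by positivity))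
  set m := √((∫ x, v x ^ 2) * ∫ x, deriv v x ^ 2)
  calc β * (9 * A ^ 2 * m + 49 / 9 * A ^ 4 * m ^ 2)
      = 9 * A ^ 2 * (β * m) + 49 / 9 * A ^ 4 * (β * m ^ 2) := by ring
    _ ≤ 9 * A ^ 2 * (√κ * C₀ * ε ^ 2 * (1 + quarticEnergy A ε v))
        + 49 / 9 * A ^ 4 * (κ * C₀ * ε ^ 2 * (1 + quarticEnergy A ε v)) :=
      add_le_add (mul_le_mul_of_nonneg_left linear_le (by positivity))
        (mul_le_mul_of_nonneg_left quadratic_le (by positivity))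
    _ = 2 * growthRate A C₀ κ * ε ^ 2 * (1 + quarticEnergy A ε v) := by
      rw [growthRate]
      ring

theorem quartic_flux_le_growthRate (hε : 0 < ε) (hβ : 0 ≤ β) (hκ : 0 ≤ κ) (hv : ContDiff ℝ 3 v)
    (hvc : HasCompactSupport v) (henergy : energy β v ≤ C₀) (hβκ : β ≤ κ * ε ^ 4) :
    A ^ 2 * (∫ x, 4 * v x ^ 3 * ksRhs A (2 * A / 3) (-(A / 3)) ε β v x)
        + ε ^ 2 * ∫ x, -2 * deriv (deriv v) x * ksRhs A (2 * A / 3) (-(A / 3)) ε β v x ≤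
      growthRate A C₀ κ * (2 * ε * energy β (deriv v)) * (1 + quarticEnergy A ε v)
        - ε ^ 3 * ∫ x, deriv (deriv v) x ^ 2 := by
  have hC₀ : 0 ≤ C₀ := (energy_nonneg hβ).trans henergy
  have hk : 0 ≤ growthRate A C₀ κ := growthRate_nonneg hC₀ hκ
  have hE : 0 ≤ 1 + quarticEnergy A ε v := add_nonneg zero_le_one quarticEnergy_nonneg
  have dissipation_ge : β * (∫ x, deriv (deriv v) x ^ 2) ≤ energy β (deriv v) :=
    le_add_of_nonneg_left (by positivity)
  have agmon := sq_le_sqrt_integral_sq_mul_integral_deriv_sq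
    (fun x => (hasDerivAt_jet hv x).1) (hv.continuous.memLp_of_hasCompactSupport hvc)
    ((hv.continuous_deriv (by norm_num)).memLp_of_hasCompactSupport hvc.deriv)
  have flux_le := quartic_flux_le (A := A) (ε := ε) (β := β) hv hvc agmon
  have weight_le := mul_sqrt_add_sq_sqrt_le_growthRate (A := A) hβ hκ henergy hβκ
  set m := √((∫ x, v x ^ 2) * ∫ x, deriv v x ^ 2)
  set V := ∫ x, deriv (deriv v) x ^ 2
  have absorbed_le : β ^ 2 * (9 * A ^ 2 * m + 49 / 9 * A ^ 4 * m ^ 2) * V ≤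
      2 * growthRate A C₀ κ * ε ^ 2 * (1 + quarticEnergy A ε v) * energy β (deriv v) :=
    calc β ^ 2 * (9 * A ^ 2 * m + 49 / 9 * A ^ 4 * m ^ 2) * V
        = β * (9 * A ^ 2 * m + 49 / 9 * A ^ 4 * m ^ 2) * (β * V) := by ring
      _ ≤ _ := by gcongr
  refine le_of_mul_le_mul_left ?_ hε
  linarith

end Energies

/-! ### Solutions -/

/-- Classical solutions of the Kudryashov–Sinelshchikov equation with `D = 0` on `[0, ∞) × ℝ` that
vanish outside a fixed bounded set of positions. As `u` is defined for all times, the equation is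
imposed only for `t ≥ 0`. -/
structure IsKSSolution (A B C ε β : ℝ) (u : ℝ → ℝ → ℝ) : Prop where
  contDiff : ContDiff ℝ 3 (uncurry u)
  eq_zero_of_le_abs : ∃ R, ∀ t x : ℝ, R ≤ |x| → u t x = 0
  equation : ∀ t : ℝ, 0 ≤ t → ∀ x : ℝ,
    deriv (fun τ => u τ x) t + A * u t x * deriv (u t) x + β * deriv (deriv (deriv (u t))) x
      - B * β * deriv (fun y => u t y * deriv (deriv (u t)) y) x
      - C * β * deriv (u t) x * deriv (deriv (u t)) x - ε * deriv (deriv (u t)) x = 0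

namespace IsKSSolution

variable {A B C C₀ ε β κ t : ℝ} {u : ℝ → ℝ → ℝ}

theorem exists_isCompact (hu : IsKSSolution A B C ε β u) :
    ∃ K : Set ℝ, IsCompact K ∧ ∀ t, ∀ x ∉ K, u t x = 0 := by
  obtain ⟨R, hR⟩ := hu.eq_zero_of_le_abs
  refine ⟨Metric.closedBall 0 R, isCompact_closedBall 0 R, fun t x hx => hR t x ?_⟩
  exact (not_le.1 (mt mem_closedBall_zero_iff.2 hx)).le

theorem contDiff_slice (hu : IsKSSolution A B C ε β u) (t : ℝ) : ContDiff ℝ 3 (u t) :=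
  hu.contDiff.comp (contDiff_prodMk_right t)

theorem hasCompactSupport (hu : IsKSSolution A B C ε β u) (t : ℝ) : HasCompactSupport (u t) :=
  have ⟨_, hK, huK⟩ := hu.exists_isCompact
  .intro hK (huK t)

theorem timeDeriv_eq (hu : IsKSSolution A B C ε β u) (ht : 0 ≤ t) :
    timeDeriv u t = ksRhs A B C ε β (u t) := by
  ext x
  rw [timeDeriv, ksRhs]
  linarith [hu.equation t ht x]

theorem hasDerivAt_integral_pow (hu : IsKSSolution A B C ε β u) {n : ℕ} (hn : n ≠ 0)
    (ht : 0 ≤ t) :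
    HasDerivAt (fun τ => ∫ x, u τ x ^ n)
      (∫ x, n * u t x ^ (n - 1) * ksRhs A B C ε β (u t) x) t := by
  obtain ⟨K, hK, huK⟩ := hu.exists_isCompact
  rw [← hu.timeDeriv_eq ht]
  exact KudryashovSinelshchikov.hasDerivAt_integral_pow hn
    (hu.contDiff.of_le (by norm_num)) hK huK t

theorem hasDerivAt_integral_deriv_sq (hu : IsKSSolution A B C ε β u) (ht : 0 ≤ t) :
    HasDerivAt (fun τ => ∫ x, deriv (u τ) x ^ 2)
      (∫ x, -2 * deriv (deriv (u t)) x * ksRhs A B C ε β (u t) x) t := by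
  obtain ⟨K, hK, huK⟩ := hu.exists_isCompact
  rw [← hu.timeDeriv_eq ht]
  exact KudryashovSinelshchikov.hasDerivAt_integral_deriv_sq
    (hu.contDiff.of_le (by norm_num)) hK huK t

theorem hasDerivAt_energy (hu : IsKSSolution A (2 * A / 3) (-(A / 3)) ε β u) (ht : 0 ≤ t) :
    HasDerivAt (fun τ => energy β (u τ)) (-(2 * ε) * energy β (deriv (u t))) t := by
  refine ((hu.hasDerivAt_integral_pow two_ne_zero ht).fun_add
    ((hu.hasDerivAt_integral_deriv_sq ht).const_mul β)).congr_deriv ?_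
  simpa [energy] using
    integral_two_mul_mul_ksRhs_add (A := A) (hu.contDiff_slice t) (hu.hasCompactSupport t)

theorem hasDerivAt_quarticEnergy (hu : IsKSSolution A B C ε β u) (ht : 0 ≤ t) :
    HasDerivAt (fun τ => quarticEnergy A ε (u τ))
      (A ^ 2 * (∫ x, 4 * u t x ^ 3 * ksRhs A B C ε β (u t) x)
        + ε ^ 2 * ∫ x, -2 * deriv (deriv (u t)) x * ksRhs A B C ε β (u t) x) t := by
  simpa [quarticEnergy] using
    ((hu.hasDerivAt_integral_pow four_ne_zero ht).const_mul (A ^ 2)).fun_add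
      ((hu.hasDerivAt_integral_deriv_sq ht).const_mul (ε ^ 2))

theorem energy_le_energy_zero (hu : IsKSSolution A (2 * A / 3) (-(A / 3)) ε β u) (hε : 0 ≤ ε)
    (hβ : 0 ≤ β) (ht : 0 ≤ t) : energy β (u t) ≤ energy β (u 0) := by
  have anti : AntitoneOn (fun τ => energy β (u τ)) (Ici 0) := by
    refine antitoneOn_of_hasDerivWithinAt_nonpos (convex_Ici 0)
      (fun s hs => (hu.hasDerivAt_energy hs).continuousAt.continuousWithinAt)
      (fun s hs => (hu.hasDerivAt_energy (interior_subset hs)).hasDerivWithinAt) fun s _ => ?_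
    have : 0 ≤ energy β (deriv (u s)) := energy_nonneg hβ
    nlinarith
  exact anti self_mem_Ici ht ht

theorem continuous_integral_deriv_deriv_sq (hu : IsKSSolution A B C ε β u) :
    Continuous fun t => ∫ x, deriv (deriv (u t)) x ^ 2 := by
  obtain ⟨K, hK, huK⟩ := hu.exists_isCompact
  exact KudryashovSinelshchikov.continuous_integral_deriv_deriv_sq
    (hu.contDiff.of_le (by norm_num)) hK huK

theorem pow_three_mul_integral_le (hu : IsKSSolution A (2 * A / 3) (-(A / 3)) ε β u) (hε : 0 < ε)
    (hβ : 0 ≤ β) (hκ : 0 ≤ κ) (hβκ : β ≤ κ * ε ^ 4) (h₀ : energy β (u 0) ≤ C₀) (ht : 0 ≤ t) :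
    ε ^ 3 * (∫ s in (0 : ℝ)..t, ∫ x, deriv (deriv (u s)) x ^ 2) ≤
      (1 + quarticEnergy A ε (u 0)) * Real.exp (growthRate A C₀ κ * energy β (u 0)) := by
  rw [← intervalIntegral.integral_const_mul]
  refine integral_le_mul_exp_of_deriv_le ht
    (fun s hs => (hu.hasDerivAt_quarticEnergy hs.1).const_add 1)
    (fun s hs => hu.hasDerivAt_energy hs.1)
    (hu.continuous_integral_deriv_deriv_sq.const_mul (ε ^ 3)).continuousOn.integrableOn_Icc
    (growthRate_nonneg ((energy_nonneg hβ).trans h₀) hκ)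
    (add_nonneg zero_le_one quarticEnergy_nonneg) (fun s _ => energy_nonneg hβ)
    (fun s _ => by positivity) fun s hs => ?_
  have flux_le := quartic_flux_le_growthRate (A := A) hε hβ hκ (hu.contDiff_slice s)
    (hu.hasCompactSupport s)
    ((hu.energy_le_energy_zero hε.le hβ hs.1).trans h₀) hβκ
  rwa [neg_mul, neg_neg]

end IsKSSolution

/-- The constant `M` in `β² ∫₀ᵗ ‖∂ₓ²u‖² ds ≤ M ε⁵` when `β ≤ κ ε⁴`; it is produced by Grönwall's
inequality, started from `1 + quarticEnergy A ε (u 0) ≤ (A² + 1) C₀ + 1`. -/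
noncomputable def hessianBound (A C₀ κ : ℝ) : ℝ :=
  κ ^ 2 * (((A ^ 2 + 1) * C₀ + 1) * Real.exp (growthRate A C₀ κ * C₀))

theorem hessianBound_pos {A C₀ κ : ℝ} (hC₀ : 0 ≤ C₀) (hκ : κ ≠ 0) : 0 < hessianBound A C₀ κ := by
  unfold hessianBound
  positivity

end KudryashovSinelshchikov

open KudryashovSinelshchikov in
theorem stmt_11_general {A C₀ ε β κ t : ℝ} {u : ℝ → ℝ → ℝ} (hε : 0 < ε) (hβ : 0 ≤ β)
    (hβκ : β ≤ κ * ε ^ 4) (hu : IsKSSolution A (2 * A / 3) (-(A / 3)) ε β u)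
    (h₀ : (∫ x, u 0 x ^ 2) + (∫ x, u 0 x ^ 4) + (β + ε ^ 2) * (∫ x, deriv (u 0) x ^ 2) ≤ C₀)
    (ht : 0 ≤ t) :
    β ^ 2 * (∫ s in (0 : ℝ)..t, ∫ x, deriv (deriv (u s)) x ^ 2) ≤
      hessianBound A C₀ κ * ε ^ 5 := by
  have hκ : 0 ≤ κ := nonneg_of_mul_nonneg_left (hβ.trans hβκ) (by positivity)
  have henergy : energy β (u 0) ≤ C₀ := energy_le_of_le h₀
  have hquartic : quarticEnergy A ε (u 0) ≤ (A ^ 2 + 1) * C₀ := quarticEnergy_le_of_le hβ h₀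
  have hC₀ : 0 ≤ C₀ := (energy_nonneg hβ).trans henergy
  have hk : 0 ≤ growthRate A C₀ κ := growthRate_nonneg hC₀ hκ
  set I := ∫ s in (0 : ℝ)..t, ∫ x, deriv (deriv (u s)) x ^ 2
  have hI : 0 ≤ I := intervalIntegral.integral_nonneg ht fun s _ => by positivity
  have gronwall := hu.pow_three_mul_integral_le hε hβ hκ hβκ henergy ht
  calc β ^ 2 * I ≤ (κ * ε ^ 4) ^ 2 * I := by gcongr
    _ = κ ^ 2 * (ε ^ 3 * I) * ε ^ 5 := by ring
    _ ≤ κ ^ 2 * ((1 + quarticEnergy A ε (u 0))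
        * Real.exp (growthRate A C₀ κ * energy β (u 0))) * ε ^ 5 := by
      gcongr
    _ ≤ hessianBound A C₀ κ * ε ^ 5 := by
      rw [hessianBound, add_comm 1]
      gcongr

/-- Estimate `β² ∫₀ᵗ ‖∂ₓ²u‖²_{L²} ds ≤ M ε⁵`. -/
theorem stmt_11 (A C₀ : ℝ) (hA : A ≠ 0) (hC₀pos : 0 < C₀) :
    ∃ M : ℝ, 0 < M ∧
      ∀ (ε β : ℝ) (u : ℝ → ℝ → ℝ),
        0 < ε → 0 < β →
        ContDiff ℝ (⊤ : ℕ∞) (Function.uncurry u) →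
        (∃ R > (0:ℝ), ∀ t x : ℝ, R ≤ |x| → u t x = 0) →
        (∀ t : ℝ, 0 ≤ t → ∀ x : ℝ,
          deriv (fun τ => u τ x) t
            + A * u t x * deriv (u t) x
            + β * deriv (deriv (deriv (u t))) x
            - (2 * A / 3) * β * deriv (fun y => u t y * deriv (deriv (u t)) y) x
            - (-(A / 3)) * β * deriv (u t) x * deriv (deriv (u t)) x
            - ε * deriv (deriv (u t)) x = 0) →
        ((∫ x : ℝ, (u 0 x) ^ 2) + (∫ x : ℝ, (u 0 x) ^ 4)
            + (β + ε ^ 2) * (∫ x : ℝ, (deriv (u 0) x) ^ 2) ≤ C₀) →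
        β ≤ ε ^ 4 / (Real.sqrt C₀ * A ^ 2) →
        ∀ t : ℝ, 0 ≤ t →
          β ^ 2 * (∫ s in (0:ℝ)..t, ∫ x : ℝ, (deriv (deriv (u s)) x) ^ 2) ≤ M * ε ^ 5 := by
  refine ⟨KudryashovSinelshchikov.hessianBound A C₀ (1 / (√C₀ * A ^ 2)),
    KudryashovSinelshchikov.hessianBound_pos hC₀pos.le (by positivity),
    fun ε β u hε hβ hu ⟨R, _, hR⟩ hequation h₀ hβε t ht => ?_⟩
  exact stmt_11_general hε hβ.le (by rwa [one_div_mul_eq_div])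
    ⟨contDiff_infty.1 hu 3, ⟨R, hR⟩, hequation⟩ h₀ ht
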